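/- arXiv:math/9807135 — 2 statements merged into one kernel-verified Lean document; each statement's English description precedes it below -/
import Mathlib

section
/- Let c₆ > 0 and suppose that Z(A' ∪ {i})/Z(A') ≥ c₆/√(d(i,A')) for every nonempty A' ⊆ ℤ² with finite complement and every i ∉ A', where d(i,A') = min_{j∈A'} ‖i − j‖₁. Let M ∈ ℕ and let B ⊆ ℤ² be finite and nonempty with connected components B_1, …, B_n, each of ℓ¹-diameter strictly less than M. Then for every A ∈ 𝒟_B with finite complement: Σ_{C ⊆ B} e^{J|C|} Z(A ∪ C)/Z(A) ≥ ∏_{l=1}^{n} (1 + e^{J} c₆/√(2M+1))^{|B_l|}. -/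
open MeasureTheory Real
open Classical

namespace DeltaPinning

/-- Sites of the lattice `ℤ²`. -/
abbrev Site : Type := ℤ × ℤ

/-- The `ℓ¹`-distance on `ℤ²`. -/
def dist1 (i j : Site) : ℕ := (i.1 - j.1).natAbs + (i.2 - j.2).natAbs

/-- Nearest-neighbour adjacency on `ℤ²`. -/
def adj (i j : Site) : Prop := dist1 i j = 1

/-- The `ℓ^∞`-norm on `ℤ²`. -/
def normInf (i : Site) : ℕ := max i.1.natAbs i.2.natAbs

/-- `ℓ¹`-distance from a site to a set. -/
noncomputable def dInf (i : Site) (A : Set Site) : ℕ := sInf {n | ∃ j ∈ A, dist1 i j = n}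

/-- `x` and `y` are connected by a nearest-neighbour path inside `B`. -/
def connectedIn (B : Set Site) (x y : Site) : Prop :=
  ∃ (n : ℕ) (p : ℕ → Site), p 0 = x ∧ p n = y ∧ (∀ m ≤ n, p m ∈ B) ∧
    ∀ m < n, adj (p m) (p (m + 1))

/-- The connected component of `x` inside `B`. -/
def component (B : Set Site) (x : Site) : Set Site := {y | connectedIn B x y}

/-- `C` is a connected component of `B`. -/
def IsComponent (B C : Set Site) : Prop := ∃ x ∈ B, C = component B x

/-- `B` is a connected set (w.r.t. nearest-neighbour adjacency). -/
def IsConnSet (B : Set Site) : Prop := ∀ x ∈ B, ∀ y ∈ B, connectedIn B x y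

/-- Exterior boundary of a set. -/
def extBd (C : Set Site) : Set Site := {i | i ∉ C ∧ ∃ j ∈ C, adj i j}

/-- `A` is a dry neighbour of `B` : `A ∩ B = ∅` and `A` meets the exterior boundary of
every connected component of `B`. -/
def dryNbr (B A : Set Site) : Prop :=
  A ∩ B = ∅ ∧ ∀ C : Set Site, IsComponent B C → (A ∩ extBd C).Nonempty

/-- `k`-enlargement of a set `D`. -/
def enl (D : Set Site) (k : ℕ) : Set Site := {i | ∃ j ∈ D, dist1 i j ≤ k}

/-- A tuple `κ` is admissible w.r.t. the components `Bc 0, …, Bc (n-1)`. -/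
def admissible {n : ℕ} (Bc : Fin n → Set Site) (κ : Fin n → ℕ) : Prop :=
  ∀ l : Fin n, 0 < (l : ℕ) →
    (κ l = 0 ∨
      enl (Bc l) (κ l) ∩ (⋃ m : Fin n, ⋃ (_ : (m : ℕ) < (l : ℕ)), enl (Bc m) (κ m)) = ∅)

/-- The union `B^{(κ)}` of the enlarged components. -/
def enlUnion {n : ℕ} (Bc : Fin n → Set Site) (κ : Fin n → ℕ) : Set Site :=
  ⋃ l : Fin n, enl (Bc l) (κ l)

/-- The box of radius `l` (in `ℓ^∞`-norm) centered at `x`. -/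
def blk (l : ℕ) (x : Site) : Set Site := {y | normInf (y - x) ≤ l}

/-- The four nearest neighbours of a site. -/
def nbrs (y : Site) : Finset Site :=
  {y + ((1 : ℤ), (0 : ℤ)), y + (-1, 0), y + (0, 1), y + (0, -1)}

/-- `γ` is a nearest-neighbour path of the renormalized lattice `(2l+1)ℤ²` (written in
renormalized coordinates) starting at `0`, leaving the box of radius `l·r` exactly at its
last point; i.e. an element of `Γ^l(r)`. -/
def pathInGamma (l r : ℕ) {k : ℕ} (γ : Fin (k + 1) → Site) : Prop :=
  γ 0 = 0 ∧ (∀ m : Fin k, adj (γ m.castSucc) (γ m.succ)) ∧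
    l * r < normInf ((2 * (l : ℤ) + 1) • γ (Fin.last k)) ∧
    ∀ m : Fin (k + 1), m ≠ Fin.last k → normInf ((2 * (l : ℤ) + 1) • γ m) ≤ l * r

/-- The path `γ` is `(r,ε)`-clean in `A`: strictly fewer than `ε·r` of its vertices `x` are
such that the block `𝐁((2l+1)x, l)` meets `A`. -/
noncomputable def cleanIn (l r : ℕ) (ε : ℝ) {k : ℕ} (γ : Fin (k + 1) → Site)
    (A : Set Site) : Prop :=
  ((((Finset.univ.image γ)).filter
      fun x => (blk l ((2 * (l : ℤ) + 1) • x) ∩ A).Nonempty).card : ℝ) < ε * r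

/-- `A` is `(r,ε)`-clean: some path of `Γ^l(r)` is `(r,ε)`-clean in `A`. -/
def isClean (l r : ℕ) (ε : ℝ) (A : Set Site) : Prop :=
  ∃ (k : ℕ) (γ : Fin (k + 1) → Site), pathInGamma l r γ ∧ cleanIn l r ε γ A

/-- Extension of a configuration on `Aᶜ` by `0` on `A`. -/
noncomputable def extZ (A : Set Site) (η : ↥(Aᶜ) → ℝ) : Site → ℝ :=
  fun i => if h : i ∈ Aᶜ then η ⟨i, h⟩ else 0

/-- Hamiltonian `H_A(φ)`: sum of `V(φ_i - φ_j)` over unordered nearest-neighbour pairs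
`{i,j}` meeting `Aᶜ` (each unordered pair appears as two ordered pairs, whence `1/2`). -/
noncomputable def ham (V : ℝ → ℝ) (A : Set Site) (φ : Site → ℝ) : ℝ :=
  (1 / 2) * ∑ᶠ p : Site × Site,
    if adj p.1 p.2 ∧ (p.1 ∉ A ∨ p.2 ∉ A) then V (φ p.1 - φ p.2) else 0

/-- Partition function `Z(A)` (defined when `Aᶜ` is finite, junk value `0` otherwise). -/
noncomputable def Zpart (V : ℝ → ℝ) (A : Set Site) : ℝ :=
  if h : (Aᶜ : Set Site).Finite then
    letI := h.fintype
    ∫ η : ↥(Aᶜ) → ℝ, Real.exp (- ham V A (extZ A η))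
  else 0

/-- Expectation of `f` (a function of the by-`0`-extended field) under the Gibbs
measure `ℙ_A`. -/
noncomputable def gibbsExp (V : ℝ → ℝ) (A : Set Site) (f : (Site → ℝ) → ℝ) : ℝ :=
  if h : (Aᶜ : Set Site).Finite then
    letI := h.fintype
    (∫ η : ↥(Aᶜ) → ℝ, f (extZ A η) * Real.exp (- ham V A (extZ A η))) / Zpart V A
  else 0

/-- The box `Λ_N = ([-N,N] ∩ ℤ)²`. -/
noncomputable def Lam (N : ℕ) : Finset Site := Finset.Icc (-(N : ℤ)) N ×ˢ Finset.Icc (-(N : ℤ)) N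

/-- `Ā = A ∪ (ℤ² ∖ Λ_N)`. -/
def bar (N : ℕ) (A : Finset Site) : Set Site := ↑A ∪ (↑(Lam N) : Set Site)ᶜ

/-- Unnormalized pinning weight `e^{J|A|} Z(Ā)`. -/
noncomputable def wt (V : ℝ → ℝ) (J : ℝ) (N : ℕ) (A : Finset Site) : ℝ :=
  Real.exp (J * A.card) * Zpart V (bar N A)

/-- Pinning weights `ρ(A)`, `A ⊆ Λ_N`. -/
noncomputable def rho (V : ℝ → ℝ) (J : ℝ) (N : ℕ) (A : Finset Site) : ℝ :=
  wt V J N A / ∑ D ∈ (Lam N).powerset, wt V J N D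

/-- Extension of a configuration on `Λ_N` by `0` outside. -/
noncomputable def extF (N : ℕ) (φ : ↥(Lam N) → ℝ) : Site → ℝ :=
  fun i => if h : i ∈ Lam N then φ ⟨i, h⟩ else 0

/-- The base measure `∏_{i ∈ Λ_N} (dφ_i + e^J δ_0(dφ_i))`. -/
noncomputable def pinnedBase (J : ℝ) (N : ℕ) : Measure (↥(Lam N) → ℝ) :=
  Measure.pi fun _ => (volume : Measure ℝ) + ENNReal.ofReal (Real.exp J) • Measure.dirac 0

/-- The unnormalized δ-pinned measure `e^{-H(φ)} ∏_{i∈Λ_N}(dφ_i + e^J δ_0(dφ_i))`. -/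
noncomputable def pinnedRaw (V : ℝ → ℝ) (J : ℝ) (N : ℕ) : Measure (↥(Lam N) → ℝ) :=
  (pinnedBase J N).withDensity fun φ =>
    ENNReal.ofReal (Real.exp (- ham V ((↑(Lam N) : Set Site)ᶜ) (extF N φ)))

/-- The δ-pinned measure `P̂_N`. -/
noncomputable def pinned (V : ℝ → ℝ) (J : ℝ) (N : ℕ) : Measure (↥(Lam N) → ℝ) :=
  (pinnedRaw V J N Set.univ)⁻¹ • pinnedRaw V J N

/-- Base measure for `ℙ̃_Ā`: Dirac mass at `0` at every coordinate of `A`, Lebesgue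
elsewhere. -/
noncomputable def tildeBase (N : ℕ) (A : Finset Site) : Measure (↥(Lam N) → ℝ) :=
  Measure.pi fun i => if (i : Site) ∈ A then Measure.dirac 0 else (volume : Measure ℝ)

/-- Unnormalized version of `ℙ̃_Ā`. -/
noncomputable def tildeRaw (V : ℝ → ℝ) (N : ℕ) (A : Finset Site) :
    Measure (↥(Lam N) → ℝ) :=
  (tildeBase N A).withDensity fun φ =>
    ENNReal.ofReal (Real.exp (- ham V (bar N A) (extF N φ)))

/-- The measure `ℙ̃_Ā` on `ℝ^{Λ_N}`: the Gibbs measure `ℙ_Ā` with Dirac mass `δ_0`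
placed at every coordinate in `A`. -/
noncomputable def tildeP (V : ℝ → ℝ) (N : ℕ) (A : Finset Site) :
    Measure (↥(Lam N) → ℝ) :=
  (tildeRaw V N A Set.univ)⁻¹ • tildeRaw V N A

/-- The sum `Σ_{C ⊆ B} e^{J|C|} Z(A ∪ C)/Z(A)`. -/
noncomputable def drySum (V : ℝ → ℝ) (J : ℝ) (B : Finset Site) (A : Set Site) : ℝ :=
  ∑ C ∈ B.powerset, Real.exp (J * C.card) * (Zpart V (A ∪ ↑C) / Zpart V A)

/-- `inf_{A ∈ 𝒟_B, |Aᶜ| < ∞} Σ_{C ⊆ B} e^{J|C|} Z(A ∪ C)/Z(A)`. -/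
noncomputable def dryInf (V : ℝ → ℝ) (J : ℝ) (B : Finset Site) : ℝ :=
  sInf (drySum V J B '' {A : Set Site | dryNbr ↑B A ∧ (Aᶜ : Set Site).Finite})

/-!
Every site `i ∈ B` is within distance `M` of `A`: the component of `i` has diameter less than `M`
and `A` meets its exterior boundary. Adding the sites of `C ⊆ B` to `A` one at a time therefore
multiplies the partition function by at least `x = c₆ / √(2M + 1)` at each step, so that
`Z(A ∪ C) ≥ x ^ |C| Z(A)`, and the binomial theorem sums these bounds to `(1 + e^J x) ^ |B|`.
-/

section PowersetSum

variable {α R : Type*} [DecidableEq α] [CommSemiring R] [PartialOrder R] [IsOrderedRing R]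
  {F : Finset α → R} {S : Finset α} {w x : R}

theorem pow_card_mul_le_of_mul_le_insert (hx : 0 ≤ x)
    (hF : ∀ C ⊆ S, ∀ i ∈ S, i ∉ C → x * F C ≤ F (insert i C)) {C : Finset α} (hC : C ⊆ S) :
    x ^ C.card * F ∅ ≤ F C := by
  induction C using Finset.induction_on with
  | empty => simp
  | insert i C hi ih =>
    obtain ⟨hiS, hCS⟩ := Finset.insert_subset_iff.1 hC
    calc x ^ (insert i C).card * F ∅ = x * (x ^ C.card * F ∅) := by
          rw [Finset.card_insert_of_notMem hi, pow_succ', mul_assoc]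
      _ ≤ x * F C := mul_le_mul_of_nonneg_left (ih hCS) hx
      _ ≤ F (insert i C) := hF C hCS i hiS hi

theorem one_add_mul_pow_card_mul_le_sum_powerset (hw : 0 ≤ w) (hx : 0 ≤ x)
    (hF : ∀ C ⊆ S, ∀ i ∈ S, i ∉ C → x * F C ≤ F (insert i C)) :
    (1 + w * x) ^ S.card * F ∅ ≤ ∑ C ∈ S.powerset, w ^ C.card * F C := by
  have binomial : (1 + w * x) ^ S.card = ∑ C ∈ S.powerset, (w * x) ^ C.card := by
    simpa only [one_pow, mul_one, add_comm] using (Finset.sum_pow_mul_eq_add_pow (w * x) 1 S).symm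
  rw [binomial, Finset.sum_mul]
  refine Finset.sum_le_sum fun C hC => ?_
  rw [mul_pow, mul_assoc]
  exact mul_le_mul_of_nonneg_left
    (pow_card_mul_le_of_mul_le_insert hx hF (Finset.mem_powerset.1 hC)) (pow_nonneg hw _)

end PowersetSum

section Distance

variable {i j : Site} {A : Set Site}

theorem dist1_comm (i j : Site) : dist1 i j = dist1 j i := by
  unfold dist1; omega

theorem dist1_triangle (i j k : Site) : dist1 i k ≤ dist1 i j + dist1 j k := by
  unfold dist1; omega

theorem eq_of_dist1_eq_zero (h : dist1 i j = 0) : i = j := by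
  unfold dist1 at h
  ext <;> omega

theorem dInf_le_dist1 (i : Site) (hj : j ∈ A) : dInf i A ≤ dist1 i j :=
  Nat.sInf_le ⟨j, hj, rfl⟩

theorem dInf_pos (hA : A.Nonempty) (hi : i ∉ A) : 0 < dInf i A := by
  obtain ⟨a, ha⟩ := hA
  obtain ⟨j, hj, hij⟩ : dInf i A ∈ {n | ∃ j ∈ A, dist1 i j = n} := Nat.sInf_mem ⟨_, a, ha, rfl⟩
  refine Nat.pos_of_ne_zero fun h => hi ?_
  rwa [eq_of_dist1_eq_zero (hij.trans h)]

theorem div_sqrt_le_div_sqrt_dInf {c r : ℝ} (hc : 0 ≤ c) (hi : i ∉ A) (hj : j ∈ A)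
    (hr : dist1 i j ≤ r) : c / √r ≤ c / √(dInf i A) := by
  have hpos : (0 : ℝ) < dInf i A := Nat.cast_pos.2 (dInf_pos ⟨j, hj⟩ hi)
  have hle : (dInf i A : ℝ) ≤ r := (Nat.cast_le.2 (dInf_le_dist1 i hj)).trans hr
  exact div_le_div_of_nonneg_left hc (Real.sqrt_pos.2 hpos) (Real.sqrt_le_sqrt hle)

end Distance

section Components

variable {B C D : Set Site} {x y z : Site}

/-- The nearest-neighbour graph of `ℤ²`. It gives access to the library's theory of reachability
for `connectedIn`. -/
def latticeGraph : SimpleGraph Site where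
  Adj := adj
  symm := ⟨fun i j h => (dist1_comm j i).trans h⟩
  loopless := ⟨fun i h => by simp [adj, dist1] at h⟩

theorem connectedIn_iff_exists_reachable :
    connectedIn B x y ↔
      ∃ (hx : x ∈ B) (hy : y ∈ B), (latticeGraph.induce B).Reachable ⟨x, hx⟩ ⟨y, hy⟩ := by
  constructor
  · rintro ⟨n, p, rfl, rfl, hB, hadj⟩
    have reach : ∀ m, ∀ hm : m ≤ n,
        (latticeGraph.induce B).Reachable ⟨p 0, hB 0 n.zero_le⟩ ⟨p m, hB m hm⟩ := by
      intro m
      induction m with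
      | zero => exact fun _ => .rfl
      | succ m ih => exact fun hm => (ih (by omega)).trans (SimpleGraph.Adj.reachable (hadj m hm))
    exact ⟨hB 0 n.zero_le, hB n le_rfl, reach n le_rfl⟩
  · rintro ⟨hx, hy, ⟨p⟩⟩
    exact ⟨p.length, fun m => p.getVert m, by simp, by simp, fun m _ => (p.getVert m).2,
      fun m hm => p.adj_getVert_succ hm⟩

theorem connectedIn.symm (h : connectedIn B x y) : connectedIn B y x := by
  obtain ⟨hx, hy, hxy⟩ := connectedIn_iff_exists_reachable.1 h
  exact connectedIn_iff_exists_reachable.2 ⟨hy, hx, hxy.symm⟩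

theorem connectedIn.trans (h : connectedIn B x y) (h' : connectedIn B y z) :
    connectedIn B x z := by
  obtain ⟨hx, _, hxy⟩ := connectedIn_iff_exists_reachable.1 h
  obtain ⟨_, hz, hyz⟩ := connectedIn_iff_exists_reachable.1 h'
  exact connectedIn_iff_exists_reachable.2 ⟨hx, hz, hxy.trans hyz⟩

theorem component_subset : component B x ⊆ B := fun _ hy =>
  (connectedIn_iff_exists_reachable.1 hy).2.1

theorem mem_component_self (hx : x ∈ B) : x ∈ component B x :=
  connectedIn_iff_exists_reachable.2 ⟨hx, hx, .rfl⟩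

theorem component_eq_of_mem (hy : y ∈ component B x) : component B y = component B x :=
  Set.ext fun _ => ⟨fun hz => connectedIn.trans hy hz, fun hz => (connectedIn.symm hy).trans hz⟩

theorem isComponent_component (hx : x ∈ B) : IsComponent B (component B x) :=
  ⟨x, hx, rfl⟩

theorem IsComponent.subset (hC : IsComponent B C) : C ⊆ B := by
  obtain ⟨x, -, rfl⟩ := hC
  exact component_subset

theorem IsComponent.eq_component (hC : IsComponent B C) (hx : x ∈ C) : C = component B x := by
  obtain ⟨y, -, rfl⟩ := hC
  exact (component_eq_of_mem hx).symm

theorem IsComponent.disjoint (hC : IsComponent B C) (hD : IsComponent B D) (hne : C ≠ D) :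
    Disjoint C D :=
  Set.disjoint_left.2 fun _ hxC hxD => hne ((hC.eq_component hxC).trans (hD.eq_component hxD).symm)

theorem sum_ncard_components {ι : Type*} [Fintype ι] {B : Finset Site} {Bc : ι → Set Site}
    (hcomp : ∀ l, IsComponent ↑B (Bc l)) (hinj : Function.Injective Bc)
    (hsurj : ∀ C : Set Site, IsComponent ↑B C → ∃ l, Bc l = C) :
    ∑ l, (Bc l).ncard = B.card := by
  have hunion : ⋃ l, Bc l = ↑B := by
    refine (Set.iUnion_subset fun l => (hcomp l).subset).antisymm fun x hx => ?_
    obtain ⟨l, hl⟩ := hsurj _ (isComponent_component hx)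
    exact Set.mem_iUnion.2 ⟨l, hl ▸ mem_component_self hx⟩
  rw [← Set.ncard_coe_finset B, ← hunion, Set.ncard_iUnion_of_finite
    (fun l => B.finite_toSet.subset (hcomp l).subset)
    (fun l m hlm => (hcomp l).disjoint (hcomp m) (hinj.ne hlm)), finsum_eq_sum_of_fintype]

end Components

section DryNeighbours

variable {A B : Set Site} {i : Site} {M : ℕ}

theorem dryNbr.notMem (hA : dryNbr B A) (hi : i ∈ B) : i ∉ A :=
  fun hiA => Set.eq_empty_iff_forall_notMem.1 hA.1 i ⟨hiA, hi⟩

theorem dryNbr.exists_dist1_le (hA : dryNbr B A) (hi : i ∈ B)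
    (hdiam : ∀ j ∈ component B i, dist1 i j < M) : ∃ a ∈ A, dist1 i a ≤ M := by
  obtain ⟨a, haA, -, j, hj, haj⟩ := hA.2 _ (isComponent_component hi)
  refine ⟨a, haA, ?_⟩
  calc dist1 i a ≤ dist1 i j + dist1 j a := dist1_triangle i j a
    _ = dist1 i j + 1 := by rw [dist1_comm j a, haj]
    _ ≤ M := hdiam j hj

end DryNeighbours

section PartitionFunction

variable {V : ℝ → ℝ} {A : Set Site}

theorem Zpart_nonneg (V : ℝ → ℝ) (A : Set Site) : 0 ≤ Zpart V A := by
  unfold Zpart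
  split_ifs
  · exact integral_nonneg fun _ => (Real.exp_pos _).le
  · exact le_rfl

theorem drySum_eq_sum_div (V : ℝ → ℝ) (J : ℝ) (B : Finset Site) (A : Set Site) :
    drySum V J B A = (∑ C ∈ B.powerset, Real.exp J ^ C.card * Zpart V (A ∪ ↑C)) / Zpart V A := by
  simp only [drySum, Finset.sum_div, mul_div_assoc, mul_comm J, Real.exp_nat_mul]

theorem one_add_exp_mul_pow_card_le_drySum (J : ℝ) {x : ℝ} (hx : 0 ≤ x) {B : Finset Site}
    (hZ : 0 < Zpart V A)
    (hratio : ∀ C ⊆ B, ∀ i ∈ B, i ∉ C → x ≤ Zpart V (A ∪ ↑C ∪ {i}) / Zpart V (A ∪ ↑C)) :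
    (1 + Real.exp J * x) ^ B.card ≤ drySum V J B A := by
  have hinsert : ∀ C ⊆ B, ∀ i ∈ B, i ∉ C →
      x * Zpart V (A ∪ ↑C) ≤ Zpart V (A ∪ ↑(insert i C)) := by
    intro C hC i hi hiC
    rw [Finset.coe_insert, ← Set.union_singleton, ← Set.union_assoc]
    exact mul_le_of_le_div₀ (Zpart_nonneg _ _) (Zpart_nonneg _ _) (hratio C hC i hi hiC)
  rw [drySum_eq_sum_div, le_div_iff₀ hZ]
  simpa only [Finset.coe_empty, Set.union_empty] using
    one_add_mul_pow_card_mul_le_sum_powerset (F := fun C : Finset Site => Zpart V (A ∪ ↑C))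
      (Real.exp_pos J).le hx hinsert

end PartitionFunction

theorem statement11_general {V : ℝ → ℝ} (J : ℝ) {c₆ : ℝ} (hc₆ : 0 < c₆)
    (hyp : ∀ A' : Set Site, A'.Nonempty → (A'ᶜ : Set Site).Finite →
      ∀ i ∉ A', c₆ / √(dInf i A') ≤ Zpart V (A' ∪ {i}) / Zpart V A')
    {M : ℕ} {B : Finset Site} (hB : B.Nonempty) {ι : Type*} [Fintype ι] {Bc : ι → Set Site}
    (hcomp : ∀ l, IsComponent ↑B (Bc l)) (hinj : Function.Injective Bc)
    (hsurj : ∀ C : Set Site, IsComponent ↑B C → ∃ l, Bc l = C)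
    (hdiam : ∀ l, ∀ x ∈ Bc l, ∀ y ∈ Bc l, dist1 x y < M)
    {A : Set Site} (hA : dryNbr ↑B A) (hAc : (Aᶜ : Set Site).Finite) :
    ∏ l, (1 + Real.exp J * c₆ / √(2 * M + 1)) ^ (Bc l).ncard ≤ drySum V J B A := by
  have hx : 0 < c₆ / √(2 * M + 1) := by positivity
  have hnear : ∀ i ∈ B, ∃ a ∈ A, dist1 i a ≤ M := by
    intro i hi
    obtain ⟨l, hl⟩ := hsurj _ (isComponent_component hi)
    exact hA.exists_dist1_le hi (hl ▸ hdiam l i (hl ▸ mem_component_self hi))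
  have hratio : ∀ C ⊆ B, ∀ i ∈ B, i ∉ C →
      c₆ / √(2 * M + 1) ≤ Zpart V (A ∪ ↑C ∪ {i}) / Zpart V (A ∪ ↑C) := by
    intro C _ i hi hiC
    obtain ⟨a, haA, hia⟩ := hnear i hi
    have hfin : (A ∪ ↑C)ᶜ.Finite := hAc.subset (Set.compl_subset_compl.2 Set.subset_union_left)
    have hiAC : i ∉ A ∪ ↑C := fun h => h.elim (hA.notMem hi) hiC
    have hr : (dist1 i a : ℝ) ≤ 2 * M + 1 := by exact_mod_cast (by omega : dist1 i a ≤ 2 * M + 1)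
    calc c₆ / √(2 * M + 1) ≤ c₆ / √(dInf i (A ∪ ↑C)) :=
          div_sqrt_le_div_sqrt_dInf hc₆.le hiAC (.inl haA) hr
      _ ≤ _ := hyp _ ⟨a, .inl haA⟩ hfin i hiAC
  have hZ : 0 < Zpart V A := by
    obtain ⟨i, hi⟩ := hB
    have hpos := hx.trans_le (hratio ∅ (Finset.empty_subset B) i hi (Finset.notMem_empty i))
    rw [Finset.coe_empty, Set.union_empty] at hpos
    exact (Zpart_nonneg V A).lt_of_ne' (div_ne_zero_iff.1 hpos.ne').2
  rw [Finset.prod_pow_eq_pow_sum, sum_ncard_components hcomp hinj hsurj, mul_div_assoc]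
  exact one_add_exp_mul_pow_card_le_drySum J hx.le hZ hratio

/-- when all components of `B` have diameter `< M`, the sum
`Σ_{C ⊆ B} e^{J|C|} Z(A∪C)/Z(A)` is at least `∏_l (1 + e^J c₆/√(2M+1))^{|B_l|}`. -/
theorem statement11
    (c_V : ℝ) (hcV : 1 ≤ c_V) (V : ℝ → ℝ)
    (hVsmooth : ContDiff ℝ (⊤ : ℕ∞) V) (hVeven : ∀ t, V (-t) = V t)
    (hVlb : ∀ t, 1 / c_V ≤ iteratedDeriv 2 V t)
    (hVub : ∀ t, iteratedDeriv 2 V t ≤ c_V)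
    (J : ℝ) (c₆ : ℝ) (hc₆ : 0 < c₆)
    (hyp : ∀ A' : Set Site, A'.Nonempty → (A'ᶜ : Set Site).Finite →
      ∀ i ∉ A', c₆ / Real.sqrt (dInf i A' : ℝ) ≤ Zpart V (A' ∪ {i}) / Zpart V A')
    (M : ℕ) (B : Finset Site) (hB : B.Nonempty)
    (n : ℕ) (Bc : Fin n → Set Site)
    (hcomp : ∀ l : Fin n, IsComponent (↑B) (Bc l))
    (hinj : Function.Injective Bc)
    (hsurj : ∀ C : Set Site, IsComponent (↑B) C → ∃ l : Fin n, Bc l = C)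
    (hdiam : ∀ l : Fin n, ∀ x ∈ Bc l, ∀ y ∈ Bc l, dist1 x y < M)
    (A : Set Site) (hA : dryNbr (↑B) A) (hAc : (Aᶜ : Set Site).Finite) :
    (∏ l : Fin n, (1 + Real.exp J * c₆ / Real.sqrt (2 * (M : ℝ) + 1)) ^ (Bc l).ncard)
      ≤ drySum V J B A :=
  statement11_general J hc₆ hyp hB hcomp hinj hsurj hdiam hA hAc

end DeltaPinning
end

section
/- Let A ⊆ ℤ² have finite complement, with 0 ∉ A. Let ℙ_A be the Gibbs measure for the potential V, and let ℙ_A^G be the Gaussian Gibbs measure defined in the same way but with V(t) replaced by the quadratic potential c_V t²/2. Then the variance of φ_0 dominates the Gaussian one: Var_{ℙ_A}(φ_0) ≥ Var_{ℙ_A^G}(φ_0). -/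
open MeasureTheory Real
open Classical

namespace DeltaPinning

/-!
Let `ν` be the probability measure with density proportional to `exp (-H)` and let `∂_v` be the
derivative in a fixed direction `v`. Integration by parts gives `Cov_ν(F, ∂_v H) = E_ν[∂_v F]` for
every observable `F`. With `F = ∂_v H` this computes the variance of the score `∂_v H`, and
`Var_ν(F - ∂_v H) ≥ 0` becomes the Cramér–Rao bound
`Var_ν(F) ≥ 2 E_ν[∂_v F] - E_ν[∂_v² H]`.

Let `G` be the energy of the Gaussian field. Its quadratic form is nondegenerate, so every linear
observable `ℓ` is `∂_v G` for some `v`, a row of the Green function. Under the Gaussian measure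
`ℓ` is its own score, whence its variance is exactly `ℓ v`. Under the measure with potential `V`,
the bound `V'' ≤ c` gives `∂_v² H ≤ ∂_v² G = ℓ v`, and the Cramér–Rao bound for `F = ℓ` reads
`Var(ℓ) ≥ 2 ℓ v - ℓ v = ℓ v`.
-/

section Potential

/-- `V` is a `C²` potential on the line whose second derivative takes values in `[m, c]`. -/
structure HasCurvatureBounds (m c : ℝ) (V : ℝ → ℝ) : Prop where
  contDiff : ContDiff ℝ 2 V
  le_iteratedDeriv_two : ∀ t, m ≤ iteratedDeriv 2 V t
  iteratedDeriv_two_le : ∀ t, iteratedDeriv 2 V t ≤ c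

lemma hasDerivAt_mul_sq_div_two (c t : ℝ) :
    HasDerivAt (fun t : ℝ => c * t ^ 2 / 2) (c * t) t := by
  refine (((hasDerivAt_pow 2 t).const_mul c).div_const 2).congr_deriv ?_
  push_cast
  ring

lemma hasDerivAt_const_mul_id (c t : ℝ) : HasDerivAt (fun t : ℝ => c * t) c t := by
  simpa using (hasDerivAt_id t).const_mul c

lemma hasCurvatureBounds_mul_sq_div_two (c : ℝ) :
    HasCurvatureBounds c c (fun t => c * t ^ 2 / 2) := by
  have hderiv2 (t : ℝ) : iteratedDeriv 2 (fun t : ℝ => c * t ^ 2 / 2) t = c := by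
    have hderiv : deriv (fun t : ℝ => c * t ^ 2 / 2) = fun t => c * t :=
      funext fun t => (hasDerivAt_mul_sq_div_two c t).deriv
    rw [iteratedDeriv_succ, iteratedDeriv_one, hderiv]
    exact (hasDerivAt_const_mul_id c t).deriv
  exact ⟨by fun_prop, fun t => (hderiv2 t).ge, fun t => (hderiv2 t).le⟩

namespace HasCurvatureBounds

variable {m c : ℝ} {V : ℝ → ℝ}

lemma le (hV : HasCurvatureBounds m c V) : m ≤ c :=
  (hV.le_iteratedDeriv_two 0).trans (hV.iteratedDeriv_two_le 0)

lemma hasDerivAt (hV : HasCurvatureBounds m c V) (t : ℝ) : HasDerivAt V (deriv V t) t :=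
  (hV.contDiff.differentiable two_ne_zero t).hasDerivAt

lemma hasDerivAt_deriv (hV : HasCurvatureBounds m c V) (t : ℝ) :
    HasDerivAt (deriv V) (iteratedDeriv 2 V t) t := by
  have hdiff : Differentiable ℝ (iteratedDeriv 1 V) :=
    hV.contDiff.differentiable_iteratedDeriv 1 (by norm_num)
  rw [iteratedDeriv_one] at hdiff
  rw [iteratedDeriv_succ, iteratedDeriv_one]
  exact (hdiff t).hasDerivAt

lemma abs_iteratedDeriv_two_le (hV : HasCurvatureBounds m c V) (t : ℝ) :
    |iteratedDeriv 2 V t| ≤ max |m| |c| :=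
  abs_le_max_abs_abs (hV.le_iteratedDeriv_two t) (hV.iteratedDeriv_two_le t)

lemma lipschitzWith_deriv (hV : HasCurvatureBounds m c V) :
    LipschitzWith (max ‖m‖₊ ‖c‖₊) (deriv V) := by
  refine lipschitzWith_of_nnnorm_deriv_le (fun t => (hV.hasDerivAt_deriv t).differentiableAt)
    fun t => ?_
  rw [(hV.hasDerivAt_deriv t).deriv]
  exact_mod_cast hV.abs_iteratedDeriv_two_le t

lemma continuous_iteratedDeriv_two (hV : HasCurvatureBounds m c V) :
    Continuous (iteratedDeriv 2 V) :=
  hV.contDiff.continuous_iteratedDeriv 2 le_rfl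

lemma tangent_add_sq_le (hV : HasCurvatureBounds m c V) (s t : ℝ) :
    V s + deriv V s * (t - s) + m * (t - s) ^ 2 / 2 ≤ V t := by
  let W : ℝ → ℝ := fun t => V t - deriv V s * (t - s) - m * (t - s) ^ 2 / 2
  have hW (t : ℝ) : HasDerivAt W (deriv V t - deriv V s - m * (t - s)) t := by
    have hlin := (hasDerivAt_const_mul_id (deriv V s) (t - s)).comp_sub_const t s
    have hquad := (hasDerivAt_mul_sq_div_two m (t - s)).comp_sub_const t s
    exact ((hV.hasDerivAt t).sub hlin).sub hquad
  have hW' (t : ℝ) : HasDerivAt (fun t => deriv V t - deriv V s - m * (t - s))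
      (iteratedDeriv 2 V t - m) t :=
    ((hV.hasDerivAt_deriv t).sub_const _).sub
      ((hasDerivAt_const_mul_id m (t - s)).comp_sub_const t s)
  have hconv : ConvexOn ℝ Set.univ W :=
    convexOn_of_hasDerivWithinAt2_nonneg convex_univ
      (fun t _ => (hW t).continuousAt.continuousWithinAt)
      (fun t _ => (hW t).hasDerivWithinAt) (fun t _ => (hW' t).hasDerivWithinAt)
      (fun t _ => sub_nonneg.2 (hV.le_iteratedDeriv_two t))
  have hcrit : derivWithin W (Set.Ioi s) s = 0 := by
    rw [(hW s).hasDerivWithinAt.derivWithin (uniqueDiffWithinAt_Ioi s)]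
    ring
  have hmin : W s ≤ W t := hconv.isMinOn_of_rightDeriv_eq_zero (by simp) hcrit (Set.mem_univ t)
  simp only [W, sub_self] at hmin
  linarith

lemma exists_add_abs_le (hV : HasCurvatureBounds m c V) (hm : 0 < m) :
    ∃ K, ∀ t, K + |t| ≤ V t := by
  refine ⟨V 0 - (|deriv V 0| + 1) ^ 2 / (2 * m), fun t => ?_⟩
  have htangent : V 0 + deriv V 0 * t + m * t ^ 2 / 2 ≤ V t := by
    simpa only [sub_zero] using hV.tangent_add_sq_le 0 t
  have hslope : -(|deriv V 0| * |t|) ≤ deriv V 0 * t := by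
    rw [← abs_mul]
    exact neg_abs_le _
  have hsquare : (|deriv V 0| + 1) * |t| ≤ (|deriv V 0| + 1) ^ 2 / (2 * m) + m * t ^ 2 / 2 := by
    have hexpand : (|deriv V 0| + 1) ^ 2 / (2 * m) + m * t ^ 2 / 2 - (|deriv V 0| + 1) * |t| =
        (|deriv V 0| + 1 - m * |t|) ^ 2 / (2 * m) := by
      rw [← sq_abs t]
      field_simp
      ring
    have hnonneg : 0 ≤ (|deriv V 0| + 1 - m * |t|) ^ 2 / (2 * m) := by positivity
    linarith
  linarith

end HasCurvatureBounds

end Potential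

section GibbsMeasure

open ProbabilityTheory

variable {E : Type*} [NormedAddCommGroup E] [NormedSpace ℝ E] [MeasurableSpace E]
  [FiniteDimensional ℝ E] [BorelSpace E] {μ : Measure E} [μ.IsAddHaarMeasure]

/-- The Gibbs measure with Hamiltonian `H`: the probability measure whose density with respect to
`μ` is proportional to `exp (-H)` (the zero measure if `exp (-H)` is not integrable). -/
noncomputable abbrev gibbsMeasure {α : Type*} [MeasurableSpace α] (μ : Measure α) (H : α → ℝ) :
    Measure α :=
  μ.tilted fun x => -H x

/-- `H` dominates an increasing affine function of the norm, which makes `exp (-H)` decay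
exponentially. -/
def HasLinearGrowth {F : Type*} [Norm F] (H : F → ℝ) : Prop :=
  ∃ K a : ℝ, 0 < a ∧ ∀ x, K + a * ‖x‖ ≤ H x

lemma exp_neg_le_mul_inv_pow {a s : ℝ} (ha : 0 < a) (hs : 0 < s) (n : ℕ) :
    exp (-(a * s)) ≤ n.factorial / a ^ n * (s ^ n)⁻¹ := by
  have hpow := pow_div_factorial_le_exp (a * s) (by positivity) n
  rw [exp_neg, ← inv_inv ((n.factorial : ℝ) / a ^ n), ← mul_inv, inv_div]
  refine inv_anti₀ (by positivity) (le_trans (le_of_eq ?_) hpow)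
  rw [mul_pow]
  ring

lemma HasLinearGrowth.integrable_one_add_norm_pow_mul_exp_neg {H : E → ℝ}
    (hgrowth : HasLinearGrowth H) (hH : Continuous H) (n : ℕ) :
    Integrable (fun x => (1 + ‖x‖) ^ n * exp (-H x)) μ := by
  obtain ⟨K, a, ha, hbound⟩ := hgrowth
  let r := Module.finrank ℝ E + 1
  let C : ℝ := exp (a - K) * ((n + r).factorial / a ^ (n + r))
  have hdom : Integrable (fun x : E => C * (1 + ‖x‖) ^ (-(r : ℝ))) μ :=
    (integrable_one_add_norm (by simp [r])).const_mul C
  refine hdom.mono' (by fun_prop) (.of_forall fun x => ?_)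
  have hs : 0 < 1 + ‖x‖ := by positivity
  have hexp : exp (-H x) ≤ exp (a - K) * exp (-(a * (1 + ‖x‖))) := by
    rw [← exp_add, exp_le_exp]
    linarith [hbound x]
  rw [norm_of_nonneg (by positivity), rpow_neg hs.le, rpow_natCast]
  calc (1 + ‖x‖) ^ n * exp (-H x)
      ≤ (1 + ‖x‖) ^ n * (exp (a - K) *
          ((n + r).factorial / a ^ (n + r) * ((1 + ‖x‖) ^ (n + r))⁻¹)) := by
        gcongr
        exact hexp.trans (by gcongr; exact exp_neg_le_mul_inv_pow ha hs _)
    _ = C * ((1 + ‖x‖) ^ r)⁻¹ := by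
        simp only [C]
        rw [pow_add (1 + ‖x‖)]
        field_simp

lemma HasLinearGrowth.integrable_exp_neg {H : E → ℝ} (hgrowth : HasLinearGrowth H)
    (hH : Continuous H) : Integrable (fun x => exp (-H x)) μ := by
  simpa using hgrowth.integrable_one_add_norm_pow_mul_exp_neg (μ := μ) hH 0

lemma HasLinearGrowth.memLp_two_of_lipschitzWith {H g : E → ℝ} {C : NNReal}
    (hgrowth : HasLinearGrowth H) (hH : Continuous H) (hg : LipschitzWith C g) :
    MemLp g 2 (gibbsMeasure μ H) := by
  have hlinear (x : E) : |g x| ≤ (|g 0| + C) * (1 + ‖x‖) := by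
    have hdist : |g x - g 0| ≤ C * ‖x‖ := by
      simpa [Real.dist_eq] using hg.dist_le_mul x 0
    have htriangle : |g x| ≤ |g x - g 0| + |g 0| := by
      simpa using abs_add_le (g x - g 0) (g 0)
    nlinarith [abs_nonneg (g 0), norm_nonneg x, C.coe_nonneg]
  rw [memLp_two_iff_integrable_sq hg.continuous.aestronglyMeasurable,
    integrable_tilted_iff (hgrowth.integrable_exp_neg hH)]
  refine ((hgrowth.integrable_one_add_norm_pow_mul_exp_neg hH 2).const_mul
    ((|g 0| + C) ^ 2)).mono' ?_ (.of_forall fun x => ?_)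
  · have := hg.continuous
    fun_prop
  · have hsq : g x ^ 2 ≤ ((|g 0| + C) * (1 + ‖x‖)) ^ 2 :=
      sq_le_sq' (neg_le_of_abs_le (hlinear x)) (le_of_abs_le (hlinear x))
    rw [smul_eq_mul, norm_of_nonneg (by positivity), ← mul_assoc, ← mul_pow, mul_comm]
    exact mul_le_mul_of_nonneg_right hsq (exp_pos _).le

variable {F F' H H' H'' : E → ℝ} {v : E}

theorem integral_lineDeriv_gibbsMeasure (hH : Integrable (fun x => exp (-H x)) μ)
    (hF : Integrable F (gibbsMeasure μ H)) (hF' : Integrable F' (gibbsMeasure μ H))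
    (hFH' : Integrable (fun x => F x * H' x) (gibbsMeasure μ H))
    (hdF : ∀ x, HasLineDerivAt ℝ F (F' x) x v) (hdH : ∀ x, HasLineDerivAt ℝ H (H' x) x v) :
    ∫ x, F' x ∂(gibbsMeasure μ H) = ∫ x, F x * H' x ∂(gibbsMeasure μ H) := by
  rw [integrable_tilted_iff hH] at hF hF' hFH'
  have hdexp (x : E) :
      HasLineDerivAt ℝ (fun x => exp (-H x)) (-(exp (-H x) * H' x)) x v := by
    simpa [HasLineDerivAt] using (hdH x).neg.exp
  have hparts : ∫ x, F x * -(exp (-H x) * H' x) ∂μ = -∫ x, F' x * exp (-H x) ∂μ :=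
    integral_bilinear_hasLineDerivAt_right_eq_neg_left_of_integrable
      (B := ContinuousLinearMap.mul ℝ ℝ)
      (by simpa [mul_comm] using hF') (by simpa [mul_comm, mul_left_comm, mul_assoc] using hFH'.neg)
      (by simpa [mul_comm] using hF) (fun x _ => hdF x) (fun x _ => hdexp x)
  simp only [mul_neg, integral_neg, neg_inj] at hparts
  simp only [integral_tilted, smul_eq_mul, div_mul_eq_mul_div, integral_div]
  congr 1
  simpa only [mul_comm, mul_left_comm, mul_assoc] using hparts.symm

theorem covariance_lineDeriv_gibbsMeasure (hH : Integrable (fun x => exp (-H x)) μ)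
    (hF : MemLp F 2 (gibbsMeasure μ H)) (hF' : Integrable F' (gibbsMeasure μ H))
    (hH' : MemLp H' 2 (gibbsMeasure μ H))
    (hdF : ∀ x, HasLineDerivAt ℝ F (F' x) x v) (hdH : ∀ x, HasLineDerivAt ℝ H (H' x) x v) :
    cov[F, H'; gibbsMeasure μ H] = ∫ x, F' x ∂(gibbsMeasure μ H) := by
  have : IsProbabilityMeasure (gibbsMeasure μ H) := isProbabilityMeasure_tilted hH
  have hmean : ∫ x, H' x ∂(gibbsMeasure μ H) = 0 := by
    have hconst := integral_lineDeriv_gibbsMeasure (F := fun _ => 1) (F' := fun _ => 0) hH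
      (integrable_const 1) (integrable_const 0) (by simpa using hH'.integrable one_le_two)
      (fun _ => hasDerivAt_const 0 1) hdH
    simpa using hconst.symm
  rw [covariance_eq_sub hF hH', hmean, mul_zero, sub_zero]
  exact (integral_lineDeriv_gibbsMeasure hH (hF.integrable one_le_two) hF'
    (hF.integrable_mul hH') hdF hdH).symm

theorem cramer_rao_gibbsMeasure (hH : Integrable (fun x => exp (-H x)) μ)
    (hF : MemLp F 2 (gibbsMeasure μ H)) (hF' : Integrable F' (gibbsMeasure μ H))
    (hH' : MemLp H' 2 (gibbsMeasure μ H)) (hH'' : Integrable H'' (gibbsMeasure μ H))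
    (hdF : ∀ x, HasLineDerivAt ℝ F (F' x) x v) (hdH : ∀ x, HasLineDerivAt ℝ H (H' x) x v)
    (hdH' : ∀ x, HasLineDerivAt ℝ H' (H'' x) x v) :
    2 * ∫ x, F' x ∂(gibbsMeasure μ H) - ∫ x, H'' x ∂(gibbsMeasure μ H) ≤
      Var[F; gibbsMeasure μ H] := by
  have : IsProbabilityMeasure (gibbsMeasure μ H) := isProbabilityMeasure_tilted hH
  have hnonneg := variance_nonneg (F - H') (gibbsMeasure μ H)
  rw [variance_sub hF hH', ← covariance_self hH'.aemeasurable,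
    covariance_lineDeriv_gibbsMeasure hH hF hF' hH' hdF hdH,
    covariance_lineDeriv_gibbsMeasure hH hH' hH'' hH' hdH' hdH] at hnonneg
  linarith

end GibbsMeasure

section RidgeSum

open ProbabilityTheory

variable {E κ : Type*} [NormedAddCommGroup E] [NormedSpace ℝ E] [Fintype κ]

/-- The linear combination of ridge functions `x ↦ f ((L x) p)` with coefficients `a`. Gradient
Hamiltonians have this form, `L` being the discrete gradient, and so do all their directional
derivatives. -/
def ridgeSum (L : E →L[ℝ] κ → ℝ) (a : κ → ℝ) (f : ℝ → ℝ) (x : E) : ℝ :=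
  ∑ p, a p * f (L x p)

variable {L : E →L[ℝ] κ → ℝ} {a : κ → ℝ} {f f' : ℝ → ℝ}

lemma continuous_ridgeSum (hf : Continuous f) : Continuous (ridgeSum L a f) := by
  unfold ridgeSum
  fun_prop

lemma hasLineDerivAt_ridgeSum (hf : ∀ t, HasDerivAt f (f' t) t) (x v : E) :
    HasLineDerivAt ℝ (ridgeSum L a f) (ridgeSum L (fun p => a p * L v p) f' x) x v := by
  refine HasDerivAt.fun_sum fun p _ => ?_
  have hline : HasDerivAt (fun t : ℝ => L (x + t • v) p) (L v p) 0 := by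
    simpa using ((hasDerivAt_id (0 : ℝ)).mul_const (L v p)).const_add (L x p)
  have hpoint : HasDerivAt f (f' (L x p)) (L (x + (0 : ℝ) • v) p) := by simpa using hf (L x p)
  exact ((hpoint.comp 0 hline).const_mul (a p)).congr_deriv (by ring)

lemma integrable_ridgeSum [MeasurableSpace E] [OpensMeasurableSpace E] {μ : Measure E}
    [IsFiniteMeasure μ] (hf : Continuous f) {M : ℝ} (hM : ∀ t, |f t| ≤ M) :
    Integrable (ridgeSum L a f) μ :=
  integrable_finsetSum _ fun p _ =>
    (Integrable.of_bound (by fun_prop) M (.of_forall fun x => hM (L x p))).const_mul (a p)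

variable [FiniteDimensional ℝ E] {m c K : ℝ} {V : ℝ → ℝ}

lemma hasLinearGrowth_ridgeSum (hL : Function.Injective L) (ha : ∀ p, 0 < a p)
    (hf : ∀ t, K + |t| ≤ f t) : HasLinearGrowth (ridgeSum L a f) := by
  let aL : E →ₗ[ℝ] κ → ℝ := LinearMap.pi fun p => a p • LinearMap.proj p ∘ₗ L.toLinearMap
  have haL : Function.Injective aL := fun x y hxy =>
    hL <| funext fun p => mul_left_cancel₀ (ha p).ne' (congrFun hxy p)
  obtain ⟨C, hC, hanti⟩ := aL.exists_antilipschitzWith (LinearMap.ker_eq_bot.2 haL)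
  refine ⟨∑ p, a p * K, (C : ℝ)⁻¹, by positivity, fun x => ?_⟩
  have hnorm : (C : ℝ)⁻¹ * ‖x‖ ≤ ‖aL x‖ :=
    (inv_mul_le_iff₀ (by positivity)).2 (hanti.le_mul_norm (map_zero aL) x)
  have hsum : ‖aL x‖ ≤ ∑ p, a p * |L x p| := by
    refine (pi_norm_le_iff_of_nonneg ?_).2 fun p => ?_
    · exact Finset.sum_nonneg fun p _ => mul_nonneg (ha p).le (abs_nonneg _)
    · have hcoord : ‖aL x p‖ = a p * |L x p| := by
        simp [aL, abs_of_pos (ha p)]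
      rw [hcoord]
      exact Finset.single_le_sum (f := fun p => a p * |L x p|)
        (fun p _ => mul_nonneg (ha p).le (abs_nonneg _)) (Finset.mem_univ p)
  calc ∑ p, a p * K + (C : ℝ)⁻¹ * ‖x‖
      ≤ ∑ p, a p * K + ∑ p, a p * |L x p| := by gcongr; exact hnorm.trans hsum
    _ = ∑ p, a p * (K + |L x p|) := by simp only [mul_add, Finset.sum_add_distrib]
    _ ≤ ridgeSum L a f x :=
        Finset.sum_le_sum fun p _ => mul_le_mul_of_nonneg_left (hf _) (ha p).le

lemma exists_ridgeSum_const_mul_eq (hL : Function.Injective L) (ha : ∀ p, 0 < a p) (hc : 0 < c)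
    (ℓ : E →L[ℝ] ℝ) : ∃ v, ridgeSum L (fun p => a p * L v p) (fun t => c * t) = ℓ := by
  let B : E →ₗ[ℝ] Module.Dual ℝ E :=
    LinearMap.mk₂ ℝ (fun v x => ridgeSum L (fun p => a p * L v p) (fun t => c * t) x)
      (fun v w x => by simp [ridgeSum, mul_add, add_mul, Finset.sum_add_distrib])
      (fun r v x => by simp [ridgeSum, Finset.mul_sum, mul_assoc, mul_left_comm])
      (fun v x y => by simp [ridgeSum, mul_add, Finset.sum_add_distrib])
      (fun r v x => by simp [ridgeSum, Finset.mul_sum, mul_left_comm])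
  have hinj : Function.Injective B := by
    refine (injective_iff_map_eq_zero B).2 fun v hv => hL ?_
    have hnonneg (p : κ) : 0 ≤ a p * L v p * (c * L v p) := by
      rw [show a p * L v p * (c * L v p) = a p * c * L v p ^ 2 by ring]
      have := ha p
      positivity
    have hform : ∑ p, a p * L v p * (c * L v p) = 0 := LinearMap.congr_fun hv v
    rw [Finset.sum_eq_zero_iff_of_nonneg fun p _ => hnonneg p] at hform
    rw [map_zero]
    funext p
    simpa [hc.ne', (ha p).ne'] using hform p (Finset.mem_univ p)
  have hsurj : Function.Surjective B :=
    (LinearMap.injective_iff_surjective_of_finrank_eq_finrank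
      (Subspace.dual_finrank_eq (K := ℝ) (V := E)).symm).1 hinj
  obtain ⟨v, hv⟩ := hsurj ℓ.toLinearMap
  exact ⟨v, funext fun x => LinearMap.congr_fun hv x⟩

variable [MeasurableSpace E] [BorelSpace E] {μ : Measure E} [μ.IsAddHaarMeasure]

lemma HasLinearGrowth.memLp_two_ridgeSum {H : E → ℝ} {C : NNReal} (hgrowth : HasLinearGrowth H)
    (hH : Continuous H) (hf : LipschitzWith C f) :
    MemLp (ridgeSum L a f) 2 (gibbsMeasure μ H) :=
  memLp_finsetSum _ fun p _ => MemLp.const_mul (hgrowth.memLp_two_of_lipschitzWith hH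
    (hf.comp ((ContinuousLinearMap.proj (R := ℝ) p).comp L).lipschitz)) (a p)

variable {ℓ : E →L[ℝ] ℝ} {v : E}

theorem variance_gibbsMeasure_quadratic (hL : Function.Injective L) (ha : ∀ p, 0 < a p)
    (hc : 0 < c) (hv : ridgeSum L (fun p => a p * L v p) (fun t => c * t) = ℓ) :
    Var[ℓ; gibbsMeasure μ (ridgeSum L a fun t => c * t ^ 2 / 2)] = ℓ v := by
  obtain ⟨K, hK⟩ := (hasCurvatureBounds_mul_sq_div_two c).exists_add_abs_le hc
  have hgrowth := hasLinearGrowth_ridgeSum hL ha hK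
  have hcont : Continuous (ridgeSum L a fun t => c * t ^ 2 / 2) :=
    continuous_ridgeSum (by fun_prop)
  have hexp := hgrowth.integrable_exp_neg (μ := μ) hcont
  have : IsProbabilityMeasure (gibbsMeasure μ (ridgeSum L a fun t => c * t ^ 2 / 2)) :=
    isProbabilityMeasure_tilted hexp
  have hℓ := hgrowth.memLp_two_of_lipschitzWith (μ := μ) hcont ℓ.lipschitz
  rw [← covariance_self hℓ.aemeasurable,
    covariance_lineDeriv_gibbsMeasure hexp hℓ (integrable_const (ℓ v)) hℓ
      (fun x => ℓ.hasFDerivAt.hasLineDerivAt v)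
      (fun x => hv ▸ hasLineDerivAt_ridgeSum (hasDerivAt_mul_sq_div_two c) x v)]
  simp

theorem le_variance_gibbsMeasure (hL : Function.Injective L) (ha : ∀ p, 0 < a p) (hm : 0 < m)
    (hV : HasCurvatureBounds m c V)
    (hv : ridgeSum L (fun p => a p * L v p) (fun t => c * t) = ℓ) :
    ℓ v ≤ Var[ℓ; gibbsMeasure μ (ridgeSum L a V)] := by
  obtain ⟨K, hK⟩ := hV.exists_add_abs_le hm
  have hgrowth := hasLinearGrowth_ridgeSum hL ha hK
  have hcont : Continuous (ridgeSum L a V) := continuous_ridgeSum hV.contDiff.continuous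
  have hexp := hgrowth.integrable_exp_neg (μ := μ) hcont
  have : IsProbabilityMeasure (gibbsMeasure μ (ridgeSum L a V)) := isProbabilityMeasure_tilted hexp
  let H'' : E → ℝ := ridgeSum L (fun p => a p * L v p * L v p) (iteratedDeriv 2 V)
  have hH''_le (x : E) : H'' x ≤ ℓ v := by
    rw [← hv]
    refine Finset.sum_le_sum fun p _ => ?_
    have hcoeff : 0 ≤ a p * L v p * L v p := by
      rw [mul_assoc]
      exact mul_nonneg (ha p).le (mul_self_nonneg _)
    linarith [mul_le_mul_of_nonneg_left (hV.iteratedDeriv_two_le (L x p)) hcoeff]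
  have hH'' : Integrable H'' (gibbsMeasure μ (ridgeSum L a V)) :=
    integrable_ridgeSum hV.continuous_iteratedDeriv_two hV.abs_iteratedDeriv_two_le
  have hmean : ∫ x, H'' x ∂(gibbsMeasure μ (ridgeSum L a V)) ≤ ℓ v := by
    simpa using integral_mono hH'' (integrable_const (ℓ v)) hH''_le
  have hbound := cramer_rao_gibbsMeasure (F' := fun _ => ℓ v) hexp
    (hgrowth.memLp_two_of_lipschitzWith hcont ℓ.lipschitz) (integrable_const _)
    (hgrowth.memLp_two_ridgeSum hcont hV.lipschitzWith_deriv) hH''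
    (fun x => ℓ.hasFDerivAt.hasLineDerivAt v) (fun x => hasLineDerivAt_ridgeSum hV.hasDerivAt x v)
    (fun x => hasLineDerivAt_ridgeSum hV.hasDerivAt_deriv x v)
  rw [integral_const, probReal_univ, one_smul] at hbound
  linarith

theorem variance_gibbsMeasure_quadratic_le (hL : Function.Injective L) (ha : ∀ p, 0 < a p)
    (hm : 0 < m) (hV : HasCurvatureBounds m c V) (ℓ : E →L[ℝ] ℝ) :
    Var[ℓ; gibbsMeasure μ (ridgeSum L a fun t => c * t ^ 2 / 2)] ≤
      Var[ℓ; gibbsMeasure μ (ridgeSum L a V)] := by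
  have hc : 0 < c := hm.trans_le hV.le
  obtain ⟨v, hv⟩ := exists_ridgeSum_const_mul_eq hL ha hc ℓ
  exact (variance_gibbsMeasure_quadratic hL ha hc hv).trans_le
    (le_variance_gibbsMeasure hL ha hm hV hv)

end RidgeSum

section Lattice

open ProbabilityTheory

variable {A : Set Site}

/-- Evaluation at `x` of the extension by `0` of a configuration on `Aᶜ`, as a continuous linear
functional of the configuration. -/
noncomputable def extEval (A : Set Site) (x : Site) : (↥Aᶜ → ℝ) →L[ℝ] ℝ :=
  if h : x ∈ Aᶜ then ContinuousLinearMap.proj ⟨x, h⟩ else 0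

lemma extEval_apply (x : Site) (η : ↥Aᶜ → ℝ) : extEval A x η = extZ A η x := by
  unfold extEval extZ
  split_ifs <;> rfl

/-- The ordered nearest-neighbour pairs meeting `Aᶜ`, over which `ham` sums. -/
def bonds (A : Set Site) : Set (Site × Site) :=
  {p | adj p.1 p.2 ∧ (p.1 ∉ A ∨ p.2 ∉ A)}

lemma finite_setOf_adj (i : Site) : {j | adj i j}.Finite := by
  refine ((Set.finite_Icc (i.1 - 1) (i.1 + 1)).prod (Set.finite_Icc (i.2 - 1) (i.2 + 1))).subset ?_
  intro j hj
  simp only [Set.mem_ofPred_eq, adj, dist1] at hj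
  simp only [Set.mem_prod, Set.mem_Icc]
  omega

lemma adj_comm {i j : Site} : adj i j ↔ adj j i := by
  simp only [adj, dist1]
  omega

lemma finite_bonds (hAc : Aᶜ.Finite) : (bonds A).Finite := by
  have hnbrs : {p : Site × Site | p.1 ∈ Aᶜ ∧ adj p.1 p.2}.Finite :=
    (hAc.prod (hAc.biUnion fun i _ => finite_setOf_adj i)).subset fun p hp =>
      ⟨hp.1, Set.mem_biUnion hp.1 hp.2⟩
  refine (hnbrs.union (hnbrs.preimage Prod.swap_injective.injOn)).subset ?_
  rintro p ⟨hadj, hp | hp⟩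
  · exact .inl ⟨hp, hadj⟩
  · exact .inr ⟨hp, adj_comm.1 hadj⟩

/-- The discrete gradient of the extension by `0` of a configuration on `Aᶜ`. -/
noncomputable def bondGradient (A : Set Site) : (↥Aᶜ → ℝ) →L[ℝ] bonds A → ℝ :=
  .pi fun p => extEval A p.1.1 - extEval A p.1.2

lemma bondGradient_apply (η : ↥Aᶜ → ℝ) (p : bonds A) :
    bondGradient A η p = extZ A η p.1.1 - extZ A η p.1.2 := by
  simp [bondGradient, extEval_apply]

lemma bondGradient_injective (hAc : Aᶜ.Finite) : Function.Injective (bondGradient A) := by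
  refine (injective_iff_map_eq_zero (bondGradient A)).2 fun η hη => ?_
  have hstep (i j : Site) (hij : adj i j) : extZ A η i = extZ A η j := by
    by_cases hmeet : i ∉ A ∨ j ∉ A
    · simpa [bondGradient_apply, sub_eq_zero] using congrFun hη ⟨(i, j), hij, hmeet⟩
    · push Not at hmeet
      simp [extZ, hmeet]
  funext i
  by_contra hi
  let ray (k : ℕ) : Site := (i.1.1 + k, i.1.2)
  have hray (k : ℕ) : extZ A η (ray k) = η i := by
    induction k with
    | zero => simp [ray, extZ]
    | succ k ih => rw [← ih, hstep (ray k) (ray (k + 1)) (by simp [adj, dist1, ray])]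
  have hray_inj : Function.Injective ray := fun k l hkl => by simpa [ray] using hkl
  have hray_mem (k : ℕ) : ray k ∈ Aᶜ := fun hk => hi (by simpa [extZ, hk] using (hray k).symm)
  exact Set.infinite_of_injective_forall_mem hray_inj hray_mem hAc

/-- The Hamiltonian `H_A` as a function of the configuration on `Aᶜ`. The coefficients are `1 / 2`
because `bonds A` contains both orientations of each pair. -/
noncomputable def energy (V : ℝ → ℝ) (A : Set Site) [Fintype ↥Aᶜ] [Fintype (bonds A)] :
    (↥Aᶜ → ℝ) → ℝ :=
  ridgeSum (bondGradient A) (fun _ => 1 / 2) V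

variable [Fintype ↥Aᶜ] [Fintype (bonds A)]

lemma ham_extZ (V : ℝ → ℝ) (η : ↥Aᶜ → ℝ) : ham V A (extZ A η) = energy V A η := by
  have hsum : ∑ᶠ p : Site × Site,
      (if adj p.1 p.2 ∧ (p.1 ∉ A ∨ p.2 ∉ A) then V (extZ A η p.1 - extZ A η p.2) else 0) =
      ∑ p : bonds A, V (bondGradient A η p) := by
    simp only [bondGradient_apply, ← finsum_eq_sum_of_fintype]
    rw [finsum_set_coe_eq_finsum_mem (bonds A) (f := fun p => V (extZ A η p.1 - extZ A η p.2))]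
    refine finsum_congr fun p => ?_
    rw [finsum_eq_if]
    exact if_congr Iff.rfl rfl rfl
  rw [ham, hsum, energy, ridgeSum, Finset.mul_sum]

lemma gibbsExp_eq_integral (V : ℝ → ℝ) (f : (Site → ℝ) → ℝ) :
    gibbsExp V A f = ∫ η, f (extZ A η) ∂(gibbsMeasure volume (energy V A)) := by
  have hAc : Aᶜ.Finite := Set.toFinite _
  rw [gibbsExp, dif_pos hAc, Zpart, dif_pos hAc, Subsingleton.elim hAc.fintype ‹Fintype ↥Aᶜ›,
    integral_tilted]
  simp only [ham_extZ, smul_eq_mul, div_mul_eq_mul_div, integral_div, mul_comm (f _)]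

lemma gibbsExp_sq_sub_sq_gibbsExp {m c : ℝ} {V : ℝ → ℝ} (hm : 0 < m)
    (hV : HasCurvatureBounds m c V) (x : Site) :
    gibbsExp V A (fun φ => φ x ^ 2) - gibbsExp V A (fun φ => φ x) ^ 2 =
      Var[extEval A x; gibbsMeasure volume (energy V A)] := by
  obtain ⟨K, hK⟩ := hV.exists_add_abs_le hm
  have hgrowth : HasLinearGrowth (energy V A) :=
    hasLinearGrowth_ridgeSum (bondGradient_injective (Set.toFinite _)) (fun _ => one_half_pos) hK
  have hcont : Continuous (energy V A) := continuous_ridgeSum hV.contDiff.continuous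
  have : IsProbabilityMeasure (gibbsMeasure volume (energy V A)) :=
    isProbabilityMeasure_tilted (hgrowth.integrable_exp_neg hcont)
  rw [variance_eq_sub (hgrowth.memLp_two_of_lipschitzWith hcont (extEval A x).lipschitz)]
  simp only [gibbsExp_eq_integral, Pi.pow_apply, extEval_apply]

end Lattice

theorem statement17_general {m c : ℝ} (hm : 0 < m) {V : ℝ → ℝ} (hV : HasCurvatureBounds m c V)
    {A : Set Site} (hAc : Aᶜ.Finite) (x : Site) :
    gibbsExp (fun t => c * t ^ 2 / 2) A (fun φ => (φ x) ^ 2)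
        - (gibbsExp (fun t => c * t ^ 2 / 2) A (fun φ => φ x)) ^ 2
      ≤ gibbsExp V A (fun φ => (φ x) ^ 2) - (gibbsExp V A (fun φ => φ x)) ^ 2 := by
  have := hAc.fintype
  have := (finite_bonds hAc).fintype
  rw [gibbsExp_sq_sub_sq_gibbsExp (hm.trans_le hV.le) (hasCurvatureBounds_mul_sq_div_two c) x,
    gibbsExp_sq_sub_sq_gibbsExp hm hV x]
  exact variance_gibbsMeasure_quadratic_le (bondGradient_injective hAc) (fun _ => one_half_pos)
    hm hV (extEval A x)

/-- reverse Brascamp–Lieb, [DGI]: the variance of `φ_0` under `ℙ_A`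
dominates the variance under the Gaussian measure with potential `c_V t²/2`. -/
theorem statement17
    (c_V : ℝ) (hcV : 1 ≤ c_V) (V : ℝ → ℝ)
    (hVsmooth : ContDiff ℝ (⊤ : ℕ∞) V) (hVeven : ∀ t, V (-t) = V t)
    (hVlb : ∀ t, 1 / c_V ≤ iteratedDeriv 2 V t)
    (hVub : ∀ t, iteratedDeriv 2 V t ≤ c_V)
    (A : Set Site) (hAc : (Aᶜ : Set Site).Finite) (h0 : (0 : Site) ∉ A) :
    gibbsExp (fun t => c_V * t ^ 2 / 2) A (fun φ => (φ 0) ^ 2)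
        - (gibbsExp (fun t => c_V * t ^ 2 / 2) A (fun φ => φ 0)) ^ 2
      ≤ gibbsExp V A (fun φ => (φ 0) ^ 2) - (gibbsExp V A (fun φ => φ 0)) ^ 2 := by
  have hm : 0 < 1 / c_V := by positivity
  have hV : HasCurvatureBounds (1 / c_V) c_V V :=
    ⟨contDiff_infty.1 hVsmooth 2, hVlb, hVub⟩
  exact statement17_general hm hV hAc 0

end DeltaPinning
end
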